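/- Let l, L, ℓ₁, ℓ₂, ℓ₃ be real numbers with 0 < l ≤ L and l ≤ ℓᵢ ≤ L for i = 1, 2, 3, and let w ≥ 0 be a real number satisfying cosh w = (cosh(ℓ₃/2) + cosh(ℓ₁/2)·cosh(ℓ₂/2)) / (sinh(ℓ₁/2)·sinh(ℓ₂/2)). Then w < L + K₁(l), where K₁(l) = log(2 / sinh²(l/2)) + log(cosh²(l/2) + 1) + log 2. -/

import Mathlib

/-!
Put `a = l / 2` and `c = cosh (ℓ₃ / 2) ≥ 1`. Since `sinh` increases and `coth` decreases on
`(0, ∞)`, the hexagon relation gives `cosh w ≤ c / sinh² a + coth² a ≤ c * (cosh² a + 1) / sinh² a`.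
Together with `exp w < 2 * cosh w` and `c ≤ exp (ℓ₃ / 2)` this bounds `exp w`, and the constant is
`2 * (cosh² a + 1) / sinh² a = exp (K₁ l) / 2`.
-/

noncomputable def K₁ (l : ℝ) : ℝ :=
  Real.log (2 / Real.sinh (l / 2) ^ 2) + Real.log (Real.cosh (l / 2) ^ 2 + 1) +
    Real.log 2

open Real Set

theorem exp_lt_two_mul_cosh (x : ℝ) : exp x < 2 * cosh x := by
  linarith [cosh_add_sinh x, sinh_lt_cosh x]

theorem cosh_le_exp_of_nonneg {x : ℝ} (hx : 0 ≤ x) : cosh x ≤ exp x := by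
  linarith [cosh_add_sinh x, sinh_nonneg_iff.2 hx]

theorem antitoneOn_cosh_div_sinh : AntitoneOn (fun x : ℝ => cosh x / sinh x) (Ioi 0) := by
  intro x hx y hy hxy
  have hsub : 0 ≤ sinh (y - x) := sinh_nonneg_iff.2 (sub_nonneg.2 hxy)
  rw [sinh_sub] at hsub
  exact (div_le_div_iff₀ (sinh_pos_iff.2 hy) (sinh_pos_iff.2 hx)).2 (by linarith)

theorem add_cosh_mul_cosh_div_sinh_mul_sinh_le {a c x y : ℝ} (ha : 0 < a) (hc : 1 ≤ c)
    (hx : a ≤ x) (hy : a ≤ y) :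
    (c + cosh x * cosh y) / (sinh x * sinh y) ≤ c * ((cosh a ^ 2 + 1) / sinh a ^ 2) := by
  have hx_pos : 0 < x := ha.trans_le hx
  have hy_pos : 0 < y := ha.trans_le hy
  have hsinh_x : sinh a ≤ sinh x := sinh_le_sinh.2 hx
  have hsinh_y : sinh a ≤ sinh y := sinh_le_sinh.2 hy
  have hcoth_x : cosh x / sinh x ≤ cosh a / sinh a := antitoneOn_cosh_div_sinh ha hx_pos hx
  have hcoth_y : cosh y / sinh y ≤ cosh a / sinh a := antitoneOn_cosh_div_sinh ha hy_pos hy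
  calc (c + cosh x * cosh y) / (sinh x * sinh y)
      = c / (sinh x * sinh y) + cosh x / sinh x * (cosh y / sinh y) := by
        rw [add_div, mul_div_mul_comm]
    _ ≤ c / (sinh a * sinh a) + cosh a / sinh a * (cosh a / sinh a) := by gcongr
    _ ≤ c / (sinh a * sinh a) + c * (cosh a / sinh a * (cosh a / sinh a)) := by
        grw [← le_mul_of_one_le_left (mul_self_nonneg _) hc]
    _ = c * ((cosh a ^ 2 + 1) / sinh a ^ 2) := by ring

theorem exp_K₁ {l : ℝ} (hl : l ≠ 0) :
    exp (K₁ l) = 4 * ((cosh (l / 2) ^ 2 + 1) / sinh (l / 2) ^ 2) := by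
  rw [K₁, exp_add, exp_add, exp_log (by positivity), exp_log (by positivity),
    exp_log two_pos]
  ring

theorem hexagon_side_lt_L_add_general {l ℓ₁ ℓ₂ ℓ₃ w : ℝ}
    (hl : 0 < l) (h1 : l ≤ ℓ₁) (h2 : l ≤ ℓ₂) (h3 : 0 ≤ ℓ₃)
    (hhex : cosh w =
      (cosh (ℓ₃ / 2) + cosh (ℓ₁ / 2) * cosh (ℓ₂ / 2)) / (sinh (ℓ₁ / 2) * sinh (ℓ₂ / 2))) :
    w < ℓ₃ / 2 + (K₁ l - log 2) := by
  have hcosh_w : cosh w ≤ cosh (ℓ₃ / 2) * ((cosh (l / 2) ^ 2 + 1) / sinh (l / 2) ^ 2) :=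
    hhex.trans_le <| add_cosh_mul_cosh_div_sinh_mul_sinh_le (half_pos hl) (one_le_cosh _)
      (by linarith) (by linarith)
  rw [← exp_lt_exp]
  calc exp w < 2 * cosh w := exp_lt_two_mul_cosh w
    _ ≤ 2 * (cosh (ℓ₃ / 2) * ((cosh (l / 2) ^ 2 + 1) / sinh (l / 2) ^ 2)) := by gcongr
    _ ≤ 2 * (exp (ℓ₃ / 2) * ((cosh (l / 2) ^ 2 + 1) / sinh (l / 2) ^ 2)) := by
        gcongr
        exact cosh_le_exp_of_nonneg (by linarith)
    _ = exp (ℓ₃ / 2 + (K₁ l - log 2)) := by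
        rw [exp_add, exp_sub, exp_K₁ hl.ne', exp_log two_pos]
        ring

theorem hexagon_side_lt_L_add (l L ℓ₁ ℓ₂ ℓ₃ w : ℝ)
    (hl : 0 < l) (hlL : l ≤ L)
    (h1 : l ≤ ℓ₁) (h1' : ℓ₁ ≤ L) (h2 : l ≤ ℓ₂) (h2' : ℓ₂ ≤ L)
    (h3 : l ≤ ℓ₃) (h3' : ℓ₃ ≤ L) (hw : 0 ≤ w)
    (hhex : Real.cosh w =
      (Real.cosh (ℓ₃ / 2) + Real.cosh (ℓ₁ / 2) * Real.cosh (ℓ₂ / 2)) /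
        (Real.sinh (ℓ₁ / 2) * Real.sinh (ℓ₂ / 2))) :
    w < L + K₁ l := by
  linarith [hexagon_side_lt_L_add_general hl h1 h2 (hl.le.trans h3) hhex,
    log_pos one_lt_two]
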